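/- Let G be a finite simple graph, S a set of vertices of G such that the subgraph of G induced on S is 2-degenerate and every vertex v ∈ S satisfies d_G(v) ≤ 7. Let L be a list assignment with |L(v)| = 10 for all vertices, and let α and β be two L-colorings of G that agree on every vertex outside S. Then G has a recoloring sequence from α to β that recolors each vertex of S at most twice and recolors no vertex outside S. -/

import Mathlib

def IsLColoring {V : Type} (G : SimpleGraph V) (L : V → Finset ℕ) (φ : V → ℕ) : Prop :=
  (∀ v, φ v ∈ L v) ∧ ∀ ⦃u w : V⦄, G.Adj u w → φ u ≠ φ w

def recolorCount {V : Type} {m : ℕ} (φ : Fin (m + 1) → V → ℕ) (v : V) : ℕ :=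
  (Finset.univ.filter fun i : Fin m => φ i.castSucc v ≠ φ i.succ v).card

def IsRecolSeq {V : Type} (G : SimpleGraph V) (L : V → Finset ℕ) {m : ℕ}
    (φ : Fin (m + 1) → V → ℕ) (α β : V → ℕ) : Prop :=
  φ 0 = α ∧ φ (Fin.last m) = β ∧ (∀ i, IsLColoring G L (φ i)) ∧
    ∀ i : Fin m, ∃! v : V, φ i.castSucc v ≠ φ i.succ v

/-!
By 2-degeneracy some `v ∈ S` has at most 2 neighbors in `S`, so at most `7 + 2 < 10` colors occur
in `α` on the neighbors of `v` or in `β` on the neighbors of `v` inside `S`. Some color `c ∈ L(v)`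
avoids all of them, and it avoids `β` on the remaining neighbors too, since `α` and `β` agree there.
Recolor `v` to `c` at the very beginning, and from `c` to `β(v)` at the very end; in between `v`
keeps the color `c`, and induction applies to `S` without `v`.
-/

section RecolorCount

variable {V : Type} {m : ℕ}

theorem recolorCount_cons (α : V → ℕ) (φ : Fin (m + 1) → V → ℕ) (v : V) :
    recolorCount (Fin.cons α φ : Fin (m + 2) → V → ℕ) v =
      (if α v ≠ φ 0 v then 1 else 0) + recolorCount φ v := by
  simp only [recolorCount, Finset.card_filter, Fin.sum_univ_succ, ← Fin.succ_castSucc,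
    Fin.castSucc_zero, Fin.cons_zero, Fin.cons_succ]

theorem recolorCount_comp_rev (φ : Fin (m + 1) → V → ℕ) (v : V) :
    recolorCount (φ ∘ Fin.rev) v = recolorCount φ v := by
  simp only [recolorCount, Finset.card_filter, Function.comp_apply, Fin.rev_castSucc, Fin.rev_succ]
  rw [← Equiv.sum_comp Fin.revPerm]
  simp only [Fin.revPerm_apply, Fin.rev_rev, ne_comm]

end RecolorCount

section RecolSeq

variable {V : Type} {G : SimpleGraph V} {L : V → Finset ℕ} {m : ℕ}
  {φ : Fin (m + 1) → V → ℕ} {α β γ : V → ℕ}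

theorem IsRecolSeq.cons (hα : IsLColoring G L α) (hαβ : ∃! v, α v ≠ β v)
    (h : IsRecolSeq G L φ β γ) : IsRecolSeq G L (Fin.cons α φ : Fin (m + 2) → V → ℕ) α γ := by
  obtain ⟨hfirst, hlast, hcol, hstep⟩ := h
  refine ⟨rfl, ?_, Fin.cases hα hcol, Fin.cases ?_ hstep⟩
  · rw [← Fin.succ_last, Fin.cons_succ, hlast]
  · simpa only [Fin.castSucc_zero, Fin.cons_zero, Fin.cons_succ, hfirst] using hαβ

theorem IsRecolSeq.rev (h : IsRecolSeq G L φ α β) : IsRecolSeq G L (φ ∘ Fin.rev) β α := by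
  obtain ⟨hfirst, hlast, hcol, hstep⟩ := h
  refine ⟨?_, ?_, fun i => hcol i.rev, fun i => ?_⟩
  · rw [Function.comp_apply, Fin.rev_zero, hlast]
  · rw [Function.comp_apply, Fin.rev_last, hfirst]
  · simpa only [Function.comp_apply, Fin.rev_castSucc, Fin.rev_succ, ne_comm] using hstep i.rev

end RecolSeq

theorem existsUnique_ne_update {V C : Type*} [DecidableEq V] {α : V → C} {v : V} {c : C}
    (h : c ≠ α v) : ∃! u, α u ≠ Function.update α v c u := by
  refine ⟨v, by simpa only [Function.update_self] using h.symm, fun u hu => ?_⟩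
  by_contra huv
  exact hu (Function.update_of_ne huv c α).symm

theorem IsLColoring.update {V : Type} [DecidableEq V] {G : SimpleGraph V} {L : V → Finset ℕ}
    {α : V → ℕ} {v : V} {c : ℕ} (hα : IsLColoring G L α) (hc : c ∈ L v)
    (hne : ∀ w, G.Adj v w → c ≠ α w) : IsLColoring G L (Function.update α v c) := by
  refine ⟨fun u => ?_, fun u w huw => ?_⟩
  · obtain rfl | hu := eq_or_ne u v
    · rwa [Function.update_self]
    · rw [Function.update_of_ne hu]
      exact hα.1 u
  · obtain rfl | hu := eq_or_ne u v
    · rw [Function.update_self, Function.update_of_ne huw.ne']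
      exact hne w huw
    · obtain rfl | hw := eq_or_ne w v
      · rw [Function.update_self, Function.update_of_ne hu]
        exact (hne u huw.symm).symm
      · rw [Function.update_of_ne hu, Function.update_of_ne hw]
        exact hα.2 huw

/-- `α` can be transformed into `β` through `L`-colorings of `G`, one vertex at a time, so that each
vertex `v` is recolored at most `b v` times. The bound is a function of the vertex so that bounds on
and off a set of vertices, and the costs of successive steps, can be handled together. -/
def RecolorableWithin {V : Type} (G : SimpleGraph V) (L : V → Finset ℕ) (b : V → ℕ)
    (α β : V → ℕ) : Prop :=
  ∃ (m : ℕ) (φ : Fin (m + 1) → V → ℕ), IsRecolSeq G L φ α β ∧ ∀ v, recolorCount φ v ≤ b v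

namespace RecolorableWithin

variable {V : Type} {G : SimpleGraph V} {L : V → Finset ℕ} {b : V → ℕ} {α β : V → ℕ}

theorem refl (hα : IsLColoring G L α) (b : V → ℕ) : RecolorableWithin G L b α α :=
  ⟨0, fun _ => α, ⟨rfl, rfl, fun _ => hα, fun i => i.elim0⟩, fun v => by simp [recolorCount]⟩

theorem symm (h : RecolorableWithin G L b α β) : RecolorableWithin G L b β α := by
  obtain ⟨m, φ, hφ, hcount⟩ := h
  exact ⟨m, φ ∘ Fin.rev, hφ.rev, fun v => (recolorCount_comp_rev φ v).trans_le (hcount v)⟩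

variable [DecidableEq V] {v : V} {c : ℕ}

theorem of_update_left (hα : IsLColoring G L α)
    (h : RecolorableWithin G L b (Function.update α v c) β) :
    RecolorableWithin G L (b + Pi.single v 1) α β := by
  obtain ⟨m, φ, hφ, hcount⟩ := h
  obtain rfl | hc := eq_or_ne c (α v)
  · rw [Function.update_eq_self] at hφ
    exact ⟨m, φ, hφ, fun u => (hcount u).trans (Nat.le_add_right _ _)⟩
  refine ⟨m + 1, Fin.cons α φ, hφ.cons hα (existsUnique_ne_update hc), fun u => ?_⟩
  rw [recolorCount_cons, hφ.1, Pi.add_apply, add_comm]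
  gcongr
  · exact hcount u
  · obtain rfl | hu := eq_or_ne u v
    · rw [Pi.single_eq_same]
      split_ifs <;> simp
    · simp [hu]

theorem of_update_right (hβ : IsLColoring G L β)
    (h : RecolorableWithin G L b α (Function.update β v c)) :
    RecolorableWithin G L (b + Pi.single v 1) α β :=
  (h.symm.of_update_left hβ).symm

end RecolorableWithin

theorem exists_mem_forall_adj_ne {V C : Type*} {G : SimpleGraph V} [DecidableRel G.Adj]
    {v : V} [Fintype (G.neighborSet v)] {A : Finset C} {S : Finset V}
    (hA : G.degree v + (S.filter (G.Adj v)).card < A.card) (α β : V → C) :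
    ∃ c ∈ A, (∀ w, G.Adj v w → c ≠ α w) ∧ ∀ w ∈ S, G.Adj v w → c ≠ β w := by
  classical
  have hcard : ((G.neighborFinset v).image α ∪ (S.filter (G.Adj v)).image β).card < A.card :=
    calc
      _ ≤ ((G.neighborFinset v).image α).card + ((S.filter (G.Adj v)).image β).card :=
        Finset.card_union_le _ _
      _ ≤ (G.neighborFinset v).card + (S.filter (G.Adj v)).card :=
        add_le_add Finset.card_image_le Finset.card_image_le
      _ < A.card := by rwa [G.card_neighborFinset_eq_degree]
  obtain ⟨c, hcA, hc⟩ := Finset.exists_mem_notMem_of_card_lt_card hcard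
  rw [Finset.mem_union, not_or] at hc
  refine ⟨c, hcA, fun w hvw hcw => hc.1 ?_, fun w hwS hvw hcw => hc.2 ?_⟩
  · exact Finset.mem_image.mpr ⟨w, (G.mem_neighborFinset v w).mpr hvw, hcw.symm⟩
  · exact Finset.mem_image.mpr ⟨w, Finset.mem_filter.mpr ⟨hwS, hvw⟩, hcw.symm⟩

theorem update_eq_update_of_notMem_erase {V C : Type*} [DecidableEq V] {S : Finset V} {α β : V → C}
    (h : ∀ u ∉ S, α u = β u) (v : V) (c : C) :
    ∀ u ∉ S.erase v, Function.update α v c u = Function.update β v c u := by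
  intro u hu
  obtain rfl | huv := eq_or_ne u v
  · rw [Function.update_self, Function.update_self]
  · rw [Function.update_of_ne huv, Function.update_of_ne huv]
    exact h u fun huS => hu (Finset.mem_erase.mpr ⟨huv, huS⟩)

theorem ite_mem_erase_add_single_add_single {V : Type*} [DecidableEq V] {S : Finset V} {v : V}
    (hv : v ∈ S) :
    (fun u => if u ∈ S.erase v then 2 else 0 : V → ℕ) + Pi.single v 1 + Pi.single v 1 =
      fun u => if u ∈ S then 2 else 0 := by
  funext u
  obtain rfl | huv := eq_or_ne u v
  · simp [hv]
  · simp [huv]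

theorem recolorableWithin_two_of_degree_add_card_lt {V : Type} [DecidableEq V] {G : SimpleGraph V}
    [DecidableRel G.Adj] [G.LocallyFinite] {L : V → Finset ℕ} {S : Finset V}
    (hS : ∀ t ⊆ S, t.Nonempty → ∃ v ∈ t, G.degree v + (t.filter (G.Adj v)).card < (L v).card)
    {α β : V → ℕ} (hα : IsLColoring G L α) (hβ : IsLColoring G L β)
    (hagree : ∀ v ∉ S, α v = β v) :
    RecolorableWithin G L (fun v => if v ∈ S then 2 else 0) α β := by
  induction S using Finset.strongInduction generalizing α β with
  | H S ih =>
    obtain rfl | hne := S.eq_empty_or_nonempty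
    · obtain rfl : α = β := funext fun v => hagree v (Finset.notMem_empty v)
      exact .refl hα _
    obtain ⟨v, hv, hlt⟩ := hS S subset_rfl hne
    obtain ⟨c, hcL, hcα, hcβS⟩ := exists_mem_forall_adj_ne hlt α β
    have hcβ : ∀ w, G.Adj v w → c ≠ β w := fun w hvw =>
      if hw : w ∈ S then hcβS w hw hvw else hagree w hw ▸ hcα w hvw
    have hinner : RecolorableWithin G L (fun u => if u ∈ S.erase v then 2 else 0)
        (Function.update α v c) (Function.update β v c) :=
      ih (S.erase v) (Finset.erase_ssubset hv)
        (fun t ht => hS t (ht.trans (Finset.erase_subset v S)))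
        (hα.update hcL hcα) (hβ.update hcL hcβ) (update_eq_update_of_notMem_erase hagree v c)
    rw [← ite_mem_erase_add_single_add_single hv]
    exact (hinner.of_update_left hα).of_update_right hβ

theorem stmt_3_general {V : Type} (G : SimpleGraph V) [DecidableRel G.Adj] [G.LocallyFinite]
    (L : V → Finset ℕ) (S : Finset V)
    (hS : ∀ t ⊆ S, t.Nonempty → ∃ v ∈ t, G.degree v + (t.filter (G.Adj v)).card < (L v).card)
    (α β : V → ℕ) (hα : IsLColoring G L α) (hβ : IsLColoring G L β)
    (hagree : ∀ v ∉ S, α v = β v) :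
    ∃ (m : ℕ) (φ : Fin (m + 1) → V → ℕ),
      IsRecolSeq G L φ α β ∧ (∀ v ∈ S, recolorCount φ v ≤ 2) ∧
      ∀ v ∉ S, recolorCount φ v = 0 := by
  classical
  obtain ⟨m, φ, hφ, hcount⟩ := recolorableWithin_two_of_degree_add_card_lt hS hα hβ hagree
  exact ⟨m, φ, hφ, fun v hv => (hcount v).trans_eq (if_pos hv),
    fun v hv => Nat.le_zero.mp ((hcount v).trans_eq (if_neg hv))⟩

/-- if `α` and `β` are `L`-colorings (with all lists of size 10)
agreeing outside `S`, the subgraph induced on `S` is 2-degenerate, and every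
vertex of `S` has degree at most 7 in `G`, then `G` has a recoloring sequence
from `α` to `β` that recolors each vertex of `S` at most twice and no vertex
outside `S`. -/
theorem stmt_3 {V : Type} [Fintype V] [DecidableEq V]
    (G : SimpleGraph V) [DecidableRel G.Adj]
    (L : V → Finset ℕ) (hL : ∀ v, (L v).card = 10)
    (S : Finset V)
    (hdegen : ∀ t : Finset V, t ⊆ S → t.Nonempty →
      ∃ v ∈ t, (t.filter (G.Adj v)).card ≤ 2)
    (hdeg : ∀ v ∈ S, G.degree v ≤ 7)
    (α β : V → ℕ) (hα : IsLColoring G L α) (hβ : IsLColoring G L β)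
    (hagree : ∀ v : V, v ∉ S → α v = β v) :
    ∃ (m : ℕ) (φ : Fin (m + 1) → V → ℕ),
      IsRecolSeq G L φ α β ∧ (∀ v ∈ S, recolorCount φ v ≤ 2) ∧
      ∀ v : V, v ∉ S → recolorCount φ v = 0 := by
  refine stmt_3_general G L S (fun t ht hne => ?_) α β hα hβ hagree
  obtain ⟨v, hv, hcard⟩ := hdegen t ht hne
  exact ⟨v, hv, by linarith [hdeg v (ht hv), hL v]⟩
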